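/- The first eigenvalue of the fractional Laplacian with zero mixed boundary conditions is strictly positive; that is, λ1 := inf { (a_{N,s}/2) ∬_Q |u(x) − u(y)|² / |x − y|^{N+2s} dx dy / ∫_Ω u² dx : u ∈ E^s_{Σ1}, ∫_Ω u² dx > 0 } satisfies λ1 > 0. -/

import Mathlib

open MeasureTheory Set

noncomputable section

/-- Euclidean space ℝ^N. -/
abbrev Rn (N : ℕ) := EuclideanSpace ℝ (Fin N)

/-- The set Q := ℝ^{2N} \ ((ℝ^N \ Ω) × (ℝ^N \ Ω)). -/
def Qset (N : ℕ) (Ω : Set (Rn N)) : Set (Rn N × Rn N) :=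
  Set.univ \ (Ωᶜ ×ˢ Ωᶜ)

/-- The kernel (u(x)-u(y))(v(x)-v(y))/|x-y|^{N+2s}. -/
def frKer (N : ℕ) (s : ℝ) (u v : Rn N → ℝ) (p : Rn N × Rn N) : ℝ :=
  (u p.1 - u p.2) * (v p.1 - v p.2) / ‖p.1 - p.2‖ ^ ((N : ℝ) + 2 * s)

/-- Membership in the space E^s_{Σ₁}: measurable, vanishing a.e. on Σ₁,
with finite L²(Ω) norm and finite Gagliardo seminorm over Q. -/
def MemE (N : ℕ) (s : ℝ) (Ω S1 : Set (Rn N)) (u : Rn N → ℝ) : Prop :=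
  Measurable u ∧ (∀ᵐ x : Rn N, x ∈ S1 → u x = 0) ∧
  IntegrableOn (fun x => (u x) ^ 2) Ω ∧
  IntegrableOn (frKer N s u u) (Qset N Ω)

/-- Weak solution of the mixed problem (-Δ)^s u = f in Ω, u = 0 in Σ₁, 𝒩_s u = 0 in Σ₂. -/
def IsWeakSolMixed (N : ℕ) (s aNs : ℝ) (Ω S1 : Set (Rn N)) (f u : Rn N → ℝ) : Prop :=
  MemE N s Ω S1 u ∧ ∀ φ : Rn N → ℝ, MemE N s Ω S1 φ →
    (aNs / 2) * ∫ p in Qset N Ω, frKer N s u φ p = ∫ x in Ω, f x * φ x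

/-! The form `∬_Q` only sees pairs with a point in `Ω`. On the smaller set `Ω × T`, with `T ⊆ Σ₁`
bounded of positive measure, `u(x) - u(y) = u(x)` and `|x - y|` is bounded, so the form controls
`∫_Ω u²`: this is a Poincaré inequality. It bounds every Rayleigh quotient below by one positive
constant. Since `sInf ∅ = 0`, one must also know that the set of quotients is nonempty: a Lipschitz
bump supported in `Ω` lies in `E^s_{Σ₁}`, its kernel being dominated by
`min(|z|, 1)² / |z|^{N+2s}`, `z = y - x`, which is integrable exactly because `0 < s < 1`. -/

lemma integrableOn_sq_min_one_mul_rpow {s : ℝ} (hs0 : 0 < s) (hs1 : s < 1) :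
    IntegrableOn (fun t : ℝ => min t 1 ^ 2 * t ^ (-1 - 2 * s)) (Ioi 0) := by
  rw [← Ioc_union_Ioi_eq_Ioi (zero_le_one (α := ℝ))]
  have near_zero : IntegrableOn (fun t : ℝ => t ^ (1 - 2 * s)) (Ioc 0 1) := by
    rw [← intervalIntegrable_iff_integrableOn_Ioc_of_le zero_le_one]
    exact intervalIntegral.intervalIntegrable_rpow' (by linarith)
  have near_infinity : IntegrableOn (fun t : ℝ => t ^ (-1 - 2 * s)) (Ioi 1) :=
    integrableOn_Ioi_rpow_of_lt (by linarith) one_pos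
  refine (near_zero.congr_fun (fun t ht => ?_) measurableSet_Ioc).union
    (near_infinity.congr_fun (fun t ht => ?_) measurableSet_Ioi)
  · simp only [min_eq_left ht.2, ← Real.rpow_natCast t 2, ← Real.rpow_add ht.1]
    congr 1
    push_cast
    ring
  · simp only [min_eq_right (mem_Ioi.1 ht).le, one_pow, one_mul]

lemma integrable_sq_min_norm_one_div_rpow {E : Type*} [NormedAddCommGroup E] [NormedSpace ℝ E]
    [FiniteDimensional ℝ E] [MeasurableSpace E] [BorelSpace E] (μ : Measure E)
    [μ.IsAddHaarMeasure] {s : ℝ} (hs0 : 0 < s) (hs1 : s < 1) :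
    Integrable (fun z : E => min ‖z‖ 1 ^ 2 / ‖z‖ ^ ((Module.finrank ℝ E : ℝ) + 2 * s)) μ := by
  cases subsingleton_or_nontrivial E
  · exact .of_finite
  rw [integrable_fun_norm_addHaar μ
    (f := fun t => min t 1 ^ 2 / t ^ ((Module.finrank ℝ E : ℝ) + 2 * s))]
  refine (integrableOn_sq_min_one_mul_rpow hs0 hs1).congr_fun (fun t ht => ?_) measurableSet_Ioi
  have hdim : 1 ≤ Module.finrank ℝ E := Module.finrank_pos
  have hpow : t ^ (-1 - 2 * s) =
      t ^ (Module.finrank ℝ E - 1) / t ^ ((Module.finrank ℝ E : ℝ) + 2 * s) := by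
    rw [← Real.rpow_natCast, ← Real.rpow_sub ht]
    congr 1
    push_cast [hdim]
    ring
  simp only [smul_eq_mul, hpow]
  ring

lemma integrable_prod_comp_sub {G F : Type*} [AddGroup G] [MeasurableSpace G] [MeasurableAdd₂ G]
    [MeasurableNeg G] [NormedAddCommGroup F] {μ ν : Measure G} [IsFiniteMeasure μ] [SFinite ν]
    [ν.IsAddRightInvariant] {f : G → F} (hf : Integrable f ν) :
    Integrable (fun p : G × G => f (p.2 - p.1)) (μ.prod ν) :=
  (measurePreserving_prod_sub μ ν).integrable_comp_of_integrable (hf.comp_snd μ)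

section Form

variable {N : ℕ} {s : ℝ} {Ω S1 : Set (Rn N)} {u : Rn N → ℝ}

lemma Qset_eq_union : Qset N Ω = Ω ×ˢ univ ∪ univ ×ˢ Ω := by
  ext p
  simp only [Qset, mem_sdiff, mem_univ, mem_prod, mem_compl_iff, mem_union]
  tauto

lemma prod_subset_Qset (T : Set (Rn N)) : Ω ×ˢ T ⊆ Qset N Ω :=
  Qset_eq_union ▸ (prod_mono_right (subset_univ T)).trans subset_union_left

lemma frKer_swap (u v : Rn N → ℝ) : frKer N s u v ∘ Prod.swap = frKer N s u v := by
  funext p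
  simp only [frKer, Function.comp_apply, Prod.fst_swap, Prod.snd_swap, norm_sub_rev p.2 p.1]
  ring

lemma frKer_self_nonneg (u : Rn N → ℝ) (p : Rn N × Rn N) : 0 ≤ frKer N s u u p :=
  div_nonneg (mul_self_nonneg _) (Real.rpow_nonneg (norm_nonneg _) _)

lemma measurable_frKer {v : Rn N → ℝ} (hu : Measurable u) (hv : Measurable v) :
    Measurable (frKer N s u v) := by
  unfold frKer
  fun_prop

lemma integrableOn_Qset_frKer {v : Rn N → ℝ} (h : IntegrableOn (frKer N s u v) (Ω ×ˢ univ)) :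
    IntegrableOn (frKer N s u v) (Qset N Ω) := by
  rw [Qset_eq_union]
  exact h.union (frKer_swap (s := s) u v ▸ h.swap)

lemma sq_div_rpow_le_frKer {x y : Rn N} {D : ℝ} (he : 0 ≤ (N : ℝ) + 2 * s) (hxy : x ≠ y)
    (hD : ‖x - y‖ ≤ D) (hy : u y = 0) :
    u x ^ 2 / D ^ ((N : ℝ) + 2 * s) ≤ frKer N s u u (x, y) := by
  have hpos : 0 < ‖x - y‖ := norm_sub_pos_iff.2 hxy
  simp only [frKer, hy, sub_zero, ← sq]
  gcongr

lemma MemE.mono {T : Set (Rn N)} (hu : MemE N s Ω S1 u) (hT : T ⊆ S1) : MemE N s Ω T u :=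
  ⟨hu.1, hu.2.1.mono fun _ hx hxT => hx (hT hxT), hu.2.2⟩

lemma MemE.mul_integral_sq_le_integral_frKer {T : Set (Rn N)} {D : ℝ} (hu : MemE N s Ω T u)
    (he : 0 ≤ (N : ℝ) + 2 * s) (hΩT : Disjoint Ω T) (hT : volume T ≠ ⊤)
    (hD : ∀ x ∈ Ω, ∀ y ∈ T, ‖x - y‖ ≤ D) :
    volume.real T / D ^ ((N : ℝ) + 2 * s) * ∫ x in Ω, u x ^ 2 ≤
      ∫ p in Qset N Ω, frKer N s u u p := by
  obtain ⟨hmeas, hzero, hsq, hker⟩ := hu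
  have : IsFiniteMeasure (volume.restrict T) := ⟨by simpa using hT.lt_top⟩
  have hprod : (volume.restrict Ω).prod (volume.restrict T) = volume.restrict (Ω ×ˢ T) :=
    Measure.prod_restrict Ω T
  have hint : IntegrableOn (fun p : Rn N × Rn N => u p.1 ^ 2 / D ^ ((N : ℝ) + 2 * s)) (Ω ×ˢ T) := by
    rw [IntegrableOn, ← hprod]
    exact (hsq.div_const _).comp_fst (volume.restrict T)
  have hle : ∀ᵐ p ∂volume.restrict (Ω ×ˢ T),
      u p.1 ^ 2 / D ^ ((N : ℝ) + 2 * s) ≤ frKer N s u u p := by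
    have hker_meas := measurable_frKer (s := s) hmeas hmeas
    rw [ae_restrict_iff (measurableSet_le (by fun_prop) hker_meas)]
    filter_upwards [Measure.quasiMeasurePreserving_snd.ae hzero] with p hp hmem
    exact sq_div_rpow_le_frKer he (hΩT.ne_of_mem hmem.1 hmem.2) (hD _ hmem.1 _ hmem.2) (hp hmem.2)
  calc volume.real T / D ^ ((N : ℝ) + 2 * s) * ∫ x in Ω, u x ^ 2
      = ∫ p in Ω ×ˢ T, u p.1 ^ 2 / D ^ ((N : ℝ) + 2 * s) := by
        rw [← hprod, integral_fun_fst (fun x => u x ^ 2 / D ^ ((N : ℝ) + 2 * s)), integral_div,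
          measureReal_restrict_apply_univ, smul_eq_mul]
        ring
    _ ≤ ∫ p in Ω ×ˢ T, frKer N s u u p :=
        integral_mono_ae hint (hker.mono_set (prod_subset_Qset T)) hle
    _ ≤ ∫ p in Qset N Ω, frKer N s u u p :=
        setIntegral_mono_set hker (ae_of_all _ (frKer_self_nonneg u))
          (prod_subset_Qset T).eventuallyLE

theorem exists_pos_mul_integral_sq_le_integral_frKer (he : 0 ≤ (N : ℝ) + 2 * s)
    (hΩ : Bornology.IsBounded Ω) (hS1 : 0 < volume S1) (hd : Disjoint Ω S1) :
    ∃ c > 0, ∀ u : Rn N → ℝ, MemE N s Ω S1 u →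
      c * ∫ x in Ω, u x ^ 2 ≤ ∫ p in Qset N Ω, frKer N s u u p := by
  obtain ⟨y₀, -, hy₀⟩ := exists_mem_forall_mem_nhdsWithin_pos_measure hS1.ne'
  set T : Set (Rn N) := S1 ∩ Metric.ball y₀ 1
  have hTb : Bornology.IsBounded T := Metric.isBounded_ball.subset inter_subset_right
  have hTpos : 0 < volume.real T := ENNReal.toReal_pos
    (hy₀ T (inter_mem_nhdsWithin S1 (Metric.ball_mem_nhds y₀ one_pos))).ne' hTb.measure_lt_top.ne
  set D : ℝ := Metric.diam (Ω ∪ T) + 1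
  have : 0 < D := add_pos_of_nonneg_of_pos Metric.diam_nonneg one_pos
  refine ⟨volume.real T / D ^ ((N : ℝ) + 2 * s), by positivity, fun u hu =>
    (hu.mono inter_subset_left).mul_integral_sq_le_integral_frKer he
      (hd.mono_right inter_subset_left) hTb.measure_lt_top.ne fun x hx y hy => ?_⟩
  have hdist := Metric.dist_le_diam_of_mem (hΩ.union hTb) (.inl hx) (.inr hy)
  rw [dist_eq_norm] at hdist
  linarith

lemma frKer_self_le_of_lipschitz_of_bounded {K : NNReal} {M : ℝ} (hK : LipschitzWith K u)
    (hM : ∀ x, |u x| ≤ M) (p : Rn N × Rn N) :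
    frKer N s u u p ≤
      max (K : ℝ) (2 * M) ^ 2 * (min ‖p.2 - p.1‖ 1 ^ 2 / ‖p.2 - p.1‖ ^ ((N : ℝ) + 2 * s)) := by
  have hdiff : |u p.1 - u p.2| ≤ max (K : ℝ) (2 * M) * min ‖p.1 - p.2‖ 1 := by
    rw [mul_min_of_nonneg _ _ (le_max_of_le_left K.coe_nonneg), mul_one]
    refine le_min ((hK.norm_sub_le p.1 p.2).trans ?_) ?_
    · gcongr
      exact le_max_left _ _
    · exact (abs_sub _ _).trans (by linarith [hM p.1, hM p.2, le_max_right (K : ℝ) (2 * M)])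
  rw [frKer, ← mul_div_assoc, ← mul_pow, ← sq, ← sq_abs, norm_sub_rev p.2 p.1]
  gcongr

theorem memE_of_lipschitz_of_bounded (hs0 : 0 < s) (hs1 : s < 1) (hΩ : Bornology.IsBounded Ω)
    {K : NNReal} {M : ℝ} (hK : LipschitzWith K u) (hM : ∀ x, |u x| ≤ M)
    (hzero : ∀ x ∈ S1, u x = 0) : MemE N s Ω S1 u := by
  have hmeas : Measurable u := hK.continuous.measurable
  have : IsFiniteMeasure (volume.restrict Ω) := ⟨by simpa using hΩ.measure_lt_top⟩
  refine ⟨hmeas, ae_of_all _ hzero, ?_, integrableOn_Qset_frKer ?_⟩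
  · refine Integrable.of_bound (hmeas.pow_const 2).aestronglyMeasurable (M ^ 2)
      (ae_of_all _ fun x => ?_)
    rw [norm_pow]
    exact pow_le_pow_left₀ (norm_nonneg _) (hM x) 2
  have hradial := integrable_sq_min_norm_one_div_rpow (volume : Measure (Rn N)) hs0 hs1
  rw [finrank_euclideanSpace_fin] at hradial
  have hprod : (volume.restrict Ω).prod volume =
      (volume : Measure (Rn N × Rn N)).restrict (Ω ×ˢ univ) := by
    rw [Measure.volume_eq_prod, ← Measure.prod_restrict, Measure.restrict_univ]
  have hdom := integrable_prod_comp_sub (μ := volume.restrict Ω) hradial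
  rw [hprod] at hdom
  refine (hdom.const_mul (max (K : ℝ) (2 * M) ^ 2)).mono'
    (measurable_frKer hmeas hmeas).aestronglyMeasurable (ae_of_all _ fun p => ?_)
  rw [Real.norm_of_nonneg (frKer_self_nonneg u p)]
  exact frKer_self_le_of_lipschitz_of_bounded hK hM p

theorem exists_memE_integral_sq_pos (hs0 : 0 < s) (hs1 : s < 1) (hΩ : Bornology.IsBounded Ω)
    (hΩi : (interior Ω).Nonempty) (hd : Disjoint Ω S1) :
    ∃ u : Rn N → ℝ, MemE N s Ω S1 u ∧ 0 < ∫ x in Ω, u x ^ 2 := by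
  obtain ⟨x₀, hx₀⟩ := hΩi
  obtain ⟨r, hr, hball⟩ := Metric.isOpen_iff.1 isOpen_interior x₀ hx₀
  set u : Rn N → ℝ := fun x => thickenedIndicator hr {x₀} x
  have hlip : LipschitzWith r.toNNReal⁻¹ u := lipschitzWith_thickenedIndicator hr {x₀}
  have hbound : ∀ x, |u x| ≤ 1 := fun x => by
    rw [abs_of_nonneg (NNReal.coe_nonneg _)]
    exact_mod_cast thickenedIndicator_le_one hr {x₀} x
  have hzero : ∀ x ∈ S1, u x = 0 := fun x hx => by
    refine NNReal.coe_eq_zero.2 (thickenedIndicator_zero hr {x₀} fun hxr => ?_)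
    rw [Metric.thickening_singleton] at hxr
    exact hd.notMem_of_mem_right hx (interior_subset (hball hxr))
  have hu := memE_of_lipschitz_of_bounded hs0 hs1 hΩ hlip hbound hzero
  have hux₀ : u x₀ = 1 := by
    simp only [u, thickenedIndicator_one hr {x₀} (mem_singleton x₀), NNReal.coe_one]
  refine ⟨u, hu, ?_⟩
  rw [setIntegral_pos_iff_support_of_nonneg_ae (ae_of_all _ fun x => sq_nonneg (u x)) hu.2.2.1]
  have hopen : IsOpen (Function.support (fun x => u x ^ 2) ∩ interior Ω) :=
    (hlip.continuous.pow 2).isOpen_support.inter isOpen_interior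
  exact (hopen.measure_pos volume ⟨x₀, by simp [hux₀], hx₀⟩).trans_le
    (measure_mono (inter_subset_inter_right _ interior_subset))

end Form

theorem first_eigenvalue_positive_general {N : ℕ} {s aNs : ℝ} (hs0 : 0 < s) (hs1 : s < 1)
    (haNs : 0 < aNs) {Ω S1 : Set (Rn N)} (hΩb : Bornology.IsBounded Ω)
    (hΩi : (interior Ω).Nonempty) (hS1m : 0 < volume S1) (hd : Disjoint Ω S1) :
    0 < sInf { r : ℝ | ∃ u : Rn N → ℝ, MemE N s Ω S1 u ∧
      0 < ∫ x in Ω, (u x) ^ 2 ∧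
      r = ((aNs / 2) * ∫ p in Qset N Ω, frKer N s u u p) / ∫ x in Ω, (u x) ^ 2 } := by
  obtain ⟨c, hc, poincare⟩ :=
    exists_pos_mul_integral_sq_le_integral_frKer (s := s) (by positivity) hΩb hS1m hd
  obtain ⟨u, hu, hupos⟩ := exists_memE_integral_sq_pos hs0 hs1 hΩb hΩi hd
  have hbound_pos : 0 < aNs / 2 * c := by positivity
  refine hbound_pos.trans_le (le_csInf ⟨_, u, hu, hupos, rfl⟩ ?_)
  rintro _ ⟨v, hv, hvpos, rfl⟩
  rw [le_div_iff₀ hvpos, mul_assoc]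
  exact mul_le_mul_of_nonneg_left (poincare v hv) (by positivity)

/-- The first eigenvalue of the fractional Laplacian with zero mixed boundary
conditions is strictly positive. -/
theorem first_eigenvalue_positive
    {N : ℕ} (hN : 1 ≤ N) {s aNs : ℝ} (hs0 : 0 < s) (hs1 : s < 1) (haNs : 0 < aNs)
    {Ω S1 S2 : Set (Rn N)} (hΩo : IsOpen Ω) (hΩb : Bornology.IsBounded Ω)
    (hΩc : IsConnected Ω)
    (hS1o : IsOpen S1) (hS2o : IsOpen S2)
    (hS1m : 0 < volume S1) (hS2m : 0 < volume S2)
    (hdisj : Disjoint S1 S2) (hcov : closure S1 ∪ closure S2 = Ωᶜ) :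
    0 < sInf { r : ℝ | ∃ u : Rn N → ℝ, MemE N s Ω S1 u ∧
      0 < ∫ x in Ω, (u x) ^ 2 ∧
      r = ((aNs / 2) * ∫ p in Qset N Ω, frKer N s u u p) / ∫ x in Ω, (u x) ^ 2 } :=
  first_eigenvalue_positive_general hs0 hs1 haNs hΩb (hΩo.interior_eq.symm ▸ hΩc.nonempty) hS1m
    (disjoint_compl_right.mono_right (hcov ▸ subset_closure.trans subset_union_left))
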